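/- arXiv:1606.02479 — 2 statements merged into one kernel-verified Lean document; each statement's English description precedes it below -/
import Mathlib

section
/- Let G be a cyclic grid graph with parameters d ≥ 1 and lengths ℓ₁,…,ℓ_d, each ℓᵢ ≥ 5, let f be a perfect graphical translation of G, let v be a vertex and set δ = f(v) − v. Then f(v − δ) = v. -/
/-- The canonical basis vector `eᵢ` in the vertex group of a cyclic grid graph:
`eᵢ[j] = 1` if `j = i` and `0` otherwise. -/
def cycBasis (d : ℕ) (ℓ : Fin d → ℕ) (i : Fin d) : ∀ j, ZMod (ℓ j) :=
  fun j => if j = i then 1 else 0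

/-- Adjacency in the cyclic grid graph with parameters `d` and `ℓ`:
`v` and `w` are neighbors iff `v - w = ±eᵢ` for some `i`. -/
def CycAdj (d : ℕ) (ℓ : Fin d → ℕ) (v w : ∀ j, ZMod (ℓ j)) : Prop :=
  ∃ i, v - w = cycBasis d ℓ i ∨ w - v = cycBasis d ℓ i

/-- A perfect graphical translation of the cyclic grid graph: a bijection of the vertex
set that maps every vertex to a neighbor and preserves (non-)adjacency both ways. -/
structure IsPerfectTranslation (d : ℕ) (ℓ : Fin d → ℕ)
    (f : (∀ j, ZMod (ℓ j)) → (∀ j, ZMod (ℓ j))) : Prop where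
  bij : Function.Bijective f
  adj_map : ∀ v, CycAdj d ℓ v (f v)
  pres : ∀ v w, CycAdj d ℓ v w ↔ CycAdj d ℓ (f v) (f w)

/-!
Put `u = v - δ`. The two edges from `u` to `f u` and from `f u` to `f v` add up to
`f v - u = 2δ`. In the coordinate where `δ` is nonzero, this says that two elements of `{0, 1, -1}`
add up to `±2` modulo some `ℓᵢ ≥ 5`, which forces both edges to be `δ`. Hence `f u - u = δ`.
-/

theorem apply_sub_eq_self_of_add_eq_two_nsmul {G : Type*} [AddCommGroup G] {S : Set G}
    (hS : ∀ a ∈ S, ∀ s ∈ S, ∀ t ∈ S, s + t = 2 • a → s = a) {f : G → G}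
    (hmove : ∀ v, f v - v ∈ S) (hadj : ∀ v w, w - v ∈ S → f w - f v ∈ S) (v : G) :
    f (v - (f v - v)) = v := by
  set u := v - (f v - v) with hu
  have huv : v - u = f v - v := by rw [hu, sub_sub_cancel]
  have edge : f v - f u ∈ S := hadj u v (huv ▸ hmove v)
  have sum_eq : (f u - u) + (f v - f u) = 2 • (f v - v) := by rw [hu]; abel
  have step_eq : f u - u = v - u := (hS _ (hmove v) _ (hmove u) _ edge sum_eq).trans huv.symm
  exact sub_left_injective step_eq

theorem eq_of_add_eq_two_nsmul {A : Type*} [AddCommGroup A] {e x y : A} (h3 : 3 • e ≠ 0)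
    (h4 : 4 • e ≠ 0) (hx : x = 0 ∨ x = e ∨ x = -e) (hy : y = 0 ∨ y = e ∨ y = -e)
    (hxy : x + y = 2 • e) : x = e := by
  -- Otherwise `y = 2 • e` or `y = 3 • e`, so one of `e`, `2 • e`, `3 • e`, `4 • e` vanishes.
  grind

section UnitSteps

variable {ι : Type*} [DecidableEq ι] {A : ι → Type*} [∀ i, AddCommGroup (A i)] {e : ∀ i, A i}

/-- The vectors `±eᵢ` of a product `∀ i, A i` of groups, where `e i` is a chosen element of `A i`
placed in coordinate `i`. A grid graph is the Cayley graph of `∀ i, A i` with respect to these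
vectors: `v` and `w` are adjacent iff `w - v ∈ unitSteps e`. -/
def unitSteps (e : ∀ i, A i) : Set (∀ i, A i) :=
  {s | ∃ i, s = Pi.single i (e i) ∨ s = -Pi.single i (e i)}

theorem neg_mem_unitSteps {s : ∀ i, A i} (hs : s ∈ unitSteps e) : -s ∈ unitSteps e := by
  obtain ⟨i, rfl | rfl⟩ := hs
  · exact ⟨i, Or.inr rfl⟩
  · exact ⟨i, Or.inl (neg_neg _)⟩

theorem apply_eq_of_mem_unitSteps {s : ∀ i, A i} (hs : s ∈ unitSteps e) (i : ι) :
    s i = 0 ∨ s i = e i ∨ s i = -e i := by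
  obtain ⟨j, rfl | rfl⟩ := hs <;> obtain rfl | hij := eq_or_ne i j <;> simp [*]

theorem eq_single_of_mem_unitSteps {s : ∀ i, A i} (hs : s ∈ unitSteps e) {i : ι}
    (h2 : 2 • e i ≠ 0) (hsi : s i = e i) : s = Pi.single i (e i) := by
  have hi : e i ≠ 0 := fun h ↦ h2 (by rw [h, smul_zero])
  obtain ⟨j, rfl | rfl⟩ := hs <;> obtain rfl | hij := eq_or_ne i j
  · rfl
  · simp [hij, hi.symm] at hsi
  · have neg_eq : -e i = e i := by simpa only [Pi.neg_apply, Pi.single_eq_same] using hsi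
    exact absurd (by rw [two_nsmul, ← neg_eq_iff_add_eq_zero, neg_eq]) h2
  · simp [hij, hi.symm] at hsi

theorem eq_single_of_add_eq_two_nsmul {i : ι} (h3 : 3 • e i ≠ 0) (h4 : 4 • e i ≠ 0)
    {s t : ∀ i, A i} (hs : s ∈ unitSteps e) (ht : t ∈ unitSteps e)
    (hst : s + t = 2 • Pi.single i (e i)) : s = Pi.single i (e i) := by
  have hi : s i + t i = 2 • e i := by simpa using congrFun hst i
  have hsi : s i = e i := eq_of_add_eq_two_nsmul h3 h4 (apply_eq_of_mem_unitSteps hs i)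
    (apply_eq_of_mem_unitSteps ht i) hi
  have h2 : 2 • e i ≠ 0 := by grind
  exact eq_single_of_mem_unitSteps hs h2 hsi

theorem eq_of_mem_unitSteps_of_add_eq_two_nsmul (h3 : ∀ i, 3 • e i ≠ 0) (h4 : ∀ i, 4 • e i ≠ 0)
    {a s t : ∀ i, A i} (ha : a ∈ unitSteps e) (hs : s ∈ unitSteps e) (ht : t ∈ unitSteps e)
    (hst : s + t = 2 • a) : s = a := by
  obtain ⟨i, rfl | rfl⟩ := ha
  · exact eq_single_of_add_eq_two_nsmul (h3 i) (h4 i) hs ht hst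
  · have neg_add_neg : -s + -t = 2 • Pi.single i (e i) := by
      rw [← neg_add, hst, smul_neg, neg_neg]
    exact neg_eq_iff_eq_neg.1 <| eq_single_of_add_eq_two_nsmul (h3 i) (h4 i)
      (neg_mem_unitSteps hs) (neg_mem_unitSteps ht) neg_add_neg

theorem perfect_translation_inverse_step_general (h3 : ∀ i, 3 • e i ≠ 0) (h4 : ∀ i, 4 • e i ≠ 0)
    {f : (∀ i, A i) → ∀ i, A i} (hmove : ∀ v, f v - v ∈ unitSteps e)
    (hadj : ∀ v w, w - v ∈ unitSteps e → f w - f v ∈ unitSteps e) (v : ∀ i, A i) :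
    f (v - (f v - v)) = v :=
  apply_sub_eq_self_of_add_eq_two_nsmul
    (fun _ ha _ hs _ ht ↦ eq_of_mem_unitSteps_of_add_eq_two_nsmul h3 h4 ha hs ht) hmove hadj v

end UnitSteps

theorem cycBasis_eq_single {d : ℕ} {ℓ : Fin d → ℕ} (i : Fin d) :
    cycBasis d ℓ i = Pi.single i 1 := by
  ext j
  obtain rfl | hij := eq_or_ne j i <;> simp [cycBasis, *]

theorem cycAdj_iff_sub_mem_unitSteps {d : ℕ} {ℓ : Fin d → ℕ} {v w : ∀ j, ZMod (ℓ j)} :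
    CycAdj d ℓ v w ↔ w - v ∈ unitSteps (1 : ∀ j, ZMod (ℓ j)) := by
  refine exists_congr fun i ↦ ?_
  rw [cycBasis_eq_single, or_comm, ← neg_sub w v, neg_eq_iff_eq_neg, Pi.one_apply]

theorem nsmul_one_zmod_ne_zero {n k : ℕ} (hk : 0 < k) (hkn : k < n) : k • (1 : ZMod n) ≠ 0 := by
  rw [nsmul_one, Ne, ZMod.natCast_eq_zero_iff]
  exact Nat.not_dvd_of_pos_of_lt hk hkn

theorem perfect_translation_inverse_step (d : ℕ) (hd : 1 ≤ d) (ℓ : Fin d → ℕ)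
    (hℓ : ∀ i, 5 ≤ ℓ i)
    (f : (∀ j, ZMod (ℓ j)) → (∀ j, ZMod (ℓ j)))
    (hf : IsPerfectTranslation d ℓ f)
    (v : ∀ j, ZMod (ℓ j)) :
    f (v - (f v - v)) = v :=
  perfect_translation_inverse_step_general
    (fun i ↦ nsmul_one_zmod_ne_zero (by decide) (by linarith [hℓ i]))
    (fun i ↦ nsmul_one_zmod_ne_zero (by decide) (hℓ i))
    (fun v ↦ cycAdj_iff_sub_mem_unitSteps.1 (hf.adj_map v))
    (fun v w h ↦ cycAdj_iff_sub_mem_unitSteps.1 <|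
      (hf.pres v w).1 (cycAdj_iff_sub_mem_unitSteps.2 h)) v
end

section
/- On the 2-dimensional noncyclic grid graph with ℓ₁ = ℓ₂ = 3 (the 3×3 grid), there exists a candidate graphical translation f with |V₀,f| = 7 that is not a geometrical translation; in particular, |V₀,f| strictly exceeds the value (ℓ₁ − 1)·ℓ₂ = 6 attained by any geometrical translation, so on this graph not every generalized graphical translation is a geometrical translation or f_ω. -/
/-- Membership in the vertex set of the noncyclic grid graph with parameters `d` and `ℓ`:
`V = [0, ℓ₁ - 1] × ⋯ × [0, ℓ_d - 1] ⊆ ℤ^d`. -/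
def InGrid (d : ℕ) (ℓ : Fin d → ℕ) (v : Fin d → ℤ) : Prop :=
  ∀ i, 0 ≤ v i ∧ v i < ℓ i

/-- Adjacency in the noncyclic grid graph: taxicab distance equal to `1`. -/
def TaxiAdj {d : ℕ} (v w : Fin d → ℤ) : Prop :=
  (∑ i, |v i - w i|) = 1

/-- The `i`-th canonical basis vector of `ℤ^d`. -/
def gridBasis (d : ℕ) (i : Fin d) : Fin d → ℤ :=
  fun j => if j = i then 1 else 0

/-- A candidate graphical translation of the noncyclic grid graph with parameters `d`
and `ℓ`: a map `f : V → V ∪ {ω}` (modeled with `Option`, `none` being the black hole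
`ω`) that is injective on `V₀,f = f⁻¹(V)`, maps every vertex of `V₀,f` to a neighbor,
and preserves (non-)adjacency both ways on `V₀,f`. -/
structure IsCandidateGridTranslation (d : ℕ) (ℓ : Fin d → ℕ)
    (f : {v : Fin d → ℤ // InGrid d ℓ v} → Option {v : Fin d → ℤ // InGrid d ℓ v}) :
    Prop where
  inj : ∀ v w x, f v = some x → f w = some x → v = w
  adj_map : ∀ v w, f v = some w → TaxiAdj v.1 w.1
  pres : ∀ v₁ v₂ w₁ w₂, f v₁ = some w₁ → f v₂ = some w₂ →
    (TaxiAdj v₁.1 v₂.1 ↔ TaxiAdj w₁.1 w₂.1)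

/-- A generalized graphical translation: a candidate graphical translation `f` such that
for every `v ∈ V₀,f` and every candidate graphical translation `g` with `g v = f v`,
one has `|V₀,g| ≤ |V₀,f|`. -/
def IsGeneralizedGridTranslation (d : ℕ) (ℓ : Fin d → ℕ)
    (f : {v : Fin d → ℤ // InGrid d ℓ v} → Option {v : Fin d → ℤ // InGrid d ℓ v}) :
    Prop :=
  IsCandidateGridTranslation d ℓ f ∧
    ∀ v, f v ≠ none → ∀ g, IsCandidateGridTranslation d ℓ g → g v = f v →
      Set.ncard {u | g u ≠ none} ≤ Set.ncard {u | f u ≠ none}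

/-- A geometrical translation on the grid: translation by `δ = ±eᵢ`, sending
out-of-range vertices to `ω`. -/
def IsGeometricalGridTranslation (d : ℕ) (ℓ : Fin d → ℕ)
    (f : {v : Fin d → ℤ // InGrid d ℓ v} → Option {v : Fin d → ℤ // InGrid d ℓ v}) :
    Prop :=
  ∃ (i : Fin d) (δ : Fin d → ℤ),
    (δ = gridBasis d i ∨ δ = -gridBasis d i) ∧
    ∀ v w, f v = some w ↔ (w : Fin d → ℤ) = v.1 + δ

/-! A translation by `±eᵢ` is defined on a box, whose size is `(ℓᵢ - 1) ∏_{j ≠ i} ℓⱼ`. Moving every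
vertex but one of the boundary 8-cycle of the 3×3 grid one step forward is a candidate defined on
seven vertices, more than the six of such a box; since the grid is finite, some candidate has a
largest domain, and it is then generalized but again too large to be geometrical. -/

/-- The vertex set of the noncyclic grid graph with lengths `ℓ`, as the subtype over which graphical
translations are defined. -/
abbrev GridVertex {d : ℕ} (ℓ : Fin d → ℕ) : Type :=
  {v : Fin d → ℤ // InGrid d ℓ v}

section Grid

open Finset

variable {d : ℕ} {ℓ : Fin d → ℕ}

lemma inGrid_iff_mem_piFinset {v : Fin d → ℤ} :
    InGrid d ℓ v ↔ v ∈ Fintype.piFinset fun j => Ico (0 : ℤ) (ℓ j) := by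
  simp only [InGrid, Fintype.mem_piFinset, mem_Ico]

instance : Finite (GridVertex ℓ) :=
  ((Fintype.piFinset fun j => Ico (0 : ℤ) (ℓ j)).finite_toSet.subset
    fun _ => inGrid_iff_mem_piFinset.mp).to_subtype

lemma ncard_setOf_inGrid_add (δ : Fin d → ℤ) :
    {v : GridVertex ℓ | InGrid d ℓ (v.1 + δ)}.ncard = ∏ j, (ℓ j - (δ j).natAbs) := by
  have image_eq : Subtype.val '' {v : GridVertex ℓ | InGrid d ℓ (v.1 + δ)} =
      (Fintype.piFinset fun j => Ico (max 0 (-δ j)) (min (ℓ j : ℤ) (ℓ j - δ j)) :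
        Finset (Fin d → ℤ)) := by
    ext v
    calc v ∈ Subtype.val '' {v : GridVertex ℓ | InGrid d ℓ (v.1 + δ)}
        ↔ InGrid d ℓ v ∧ InGrid d ℓ (v + δ) :=
          ⟨by rintro ⟨v, hv, rfl⟩; exact ⟨v.2, hv⟩, fun ⟨hv, hvδ⟩ => ⟨⟨v, hv⟩, hvδ, rfl⟩⟩
      _ ↔ ∀ j, max 0 (-δ j) ≤ v j ∧ v j < min (ℓ j : ℤ) (ℓ j - δ j) := by
          simp only [InGrid, Pi.add_apply, ← forall_and]
          exact forall_congr' fun j => by omega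
      _ ↔ _ := by simp only [mem_coe, Fintype.mem_piFinset, mem_Ico]
  rw [← Set.ncard_image_of_injective _ Subtype.val_injective, image_eq, Set.ncard_coe_finset,
    Fintype.card_piFinset]
  exact prod_congr rfl fun j _ => by rw [Int.card_Ico]; omega

lemma natAbs_of_eq_gridBasis_or_neg {i : Fin d} {δ : Fin d → ℤ}
    (hδ : δ = gridBasis d i ∨ δ = -gridBasis d i) (j : Fin d) :
    (δ j).natAbs = if j = i then 1 else 0 := by
  rcases hδ with rfl | rfl <;> by_cases hj : j = i <;> simp [gridBasis, hj]

lemma IsGeometricalGridTranslation.exists_ncard_eq {f : GridVertex ℓ → Option (GridVertex ℓ)}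
    (hf : IsGeometricalGridTranslation d ℓ f) :
    ∃ i, {v | f v ≠ none}.ncard = (ℓ i - 1) * ∏ j ∈ univ.erase i, ℓ j := by
  obtain ⟨i, δ, hδ, hfδ⟩ := hf
  have domain_eq : {v | f v ≠ none} = {v | InGrid d ℓ (v.1 + δ)} := by
    ext v
    simp only [Set.mem_ofPred_eq, Option.ne_none_iff_exists', hfδ, Subtype.exists,
      exists_prop, exists_eq_right]
  refine ⟨i, ?_⟩
  rw [domain_eq, ncard_setOf_inGrid_add, ← mul_prod_erase _ _ (mem_univ i),
    natAbs_of_eq_gridBasis_or_neg hδ, if_pos rfl]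
  congr 1
  refine prod_congr rfl fun j hj => ?_
  rw [natAbs_of_eq_gridBasis_or_neg hδ, if_neg (ne_of_mem_erase hj), Nat.sub_zero]

lemma IsCandidateGridTranslation.exists_isGeneralized_ncard_le
    {f : GridVertex ℓ → Option (GridVertex ℓ)} (hf : IsCandidateGridTranslation d ℓ f) :
    ∃ g, IsGeneralizedGridTranslation d ℓ g ∧ {v | f v ≠ none}.ncard ≤ {v | g v ≠ none}.ncard := by
  obtain ⟨g, hg, hmax⟩ := Set.exists_max_image {g | IsCandidateGridTranslation d ℓ g}
    (fun g => {v | g v ≠ none}.ncard) (Set.toFinite _) ⟨f, hf⟩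
  exact ⟨g, ⟨hg, fun _ _ h hh _ => hmax h hh⟩, hmax f hf⟩

end Grid

section SequenceShift

variable {V : Type*} {n : ℕ} {p : Fin (n + 1) → V}

/-- The partial map sending each term of the sequence `p₀, …, pₙ` except the last to the next one,
and everything else to `none`; it is meant for injective `p`. -/
noncomputable def sequenceShift (p : Fin (n + 1) → V) (v : V) : Option V :=
  (Function.partialInv (fun i : Fin n => p i.castSucc) v).map fun i => p i.succ

lemma sequenceShift_eq_some_iff (hp : Function.Injective p) {v w : V} :
    sequenceShift p v = some w ↔ ∃ i : Fin n, p i.castSucc = v ∧ p i.succ = w := by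
  have hinv := (hp.comp (Fin.castSucc_injective n)).isPartialInv
  simp only [sequenceShift, Option.map_eq_some_iff]
  exact exists_congr fun i => and_congr_left fun _ => hinv i v

lemma ncard_sequenceShift_ne_none (hp : Function.Injective p) :
    {v | sequenceShift p v ≠ none}.ncard = n := by
  have domain_eq : {v | sequenceShift p v ≠ none} = Set.range fun i : Fin n => p i.castSucc := by
    ext v
    simp only [Set.mem_ofPred_eq, Option.ne_none_iff_exists', sequenceShift_eq_some_iff hp,
      Set.mem_range]
    exact ⟨fun ⟨_, i, hi, _⟩ => ⟨i, hi⟩, fun ⟨i, hi⟩ => ⟨_, i, hi, rfl⟩⟩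
  exact domain_eq ▸
    (Set.ncard_range_of_injective (hp.comp (Fin.castSucc_injective n))).trans (Nat.card_fin n)

lemma isCandidateGridTranslation_sequenceShift {d : ℕ} {ℓ : Fin d → ℕ}
    {p : Fin (n + 1) → GridVertex ℓ} (hp : Function.Injective p)
    (hadj : ∀ i : Fin n, TaxiAdj (p i.castSucc).1 (p i.succ).1)
    (hpres : ∀ i j : Fin n, TaxiAdj (p i.castSucc).1 (p j.castSucc).1 ↔
      TaxiAdj (p i.succ).1 (p j.succ).1) :
    IsCandidateGridTranslation d ℓ (sequenceShift p) where
  inj v w x hv hw := by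
    obtain ⟨i, rfl, rfl⟩ := (sequenceShift_eq_some_iff hp).mp hv
    obtain ⟨j, rfl, hji⟩ := (sequenceShift_eq_some_iff hp).mp hw
    rw [Fin.succ_injective n (hp hji)]
  adj_map v w hv := by
    obtain ⟨i, rfl, rfl⟩ := (sequenceShift_eq_some_iff hp).mp hv
    exact hadj i
  pres v₁ v₂ w₁ w₂ h₁ h₂ := by
    obtain ⟨i, rfl, rfl⟩ := (sequenceShift_eq_some_iff hp).mp h₁
    obtain ⟨j, rfl, rfl⟩ := (sequenceShift_eq_some_iff hp).mp h₂
    exact hpres i j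

end SequenceShift

/-- The boundary 8-cycle of the 3×3 grid, listed from the corner `(0, 0)`. -/
def boundaryCycle (k : Fin 8) : GridVertex ![3, 3] :=
  ⟨![![0, 0], ![0, 1], ![0, 2], ![1, 2], ![2, 2], ![2, 1], ![2, 0], ![1, 0]] k, by
    unfold InGrid
    decide +revert⟩

lemma boundaryCycle_injective : Function.Injective boundaryCycle := by
  decide

lemma isCandidateGridTranslation_sequenceShift_boundaryCycle :
    IsCandidateGridTranslation 2 ![3, 3] (sequenceShift boundaryCycle) :=
  isCandidateGridTranslation_sequenceShift boundaryCycle_injective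
    (by unfold TaxiAdj; decide) (by unfold TaxiAdj; decide)

lemma IsGeometricalGridTranslation.ncard_three_by_three
    {f : GridVertex ![3, 3] → Option (GridVertex ![3, 3])}
    (hf : IsGeometricalGridTranslation 2 ![3, 3] f) :
    {v | f v ≠ none}.ncard = (3 - 1) * 3 := by
  obtain ⟨i, hi⟩ := hf.exists_ncard_eq
  fin_cases i <;> exact hi

theorem three_by_three_counterexample :
    (∃ f : {v : Fin 2 → ℤ // InGrid 2 ![3, 3] v} →
        Option {v : Fin 2 → ℤ // InGrid 2 ![3, 3] v},
      IsCandidateGridTranslation 2 ![3, 3] f ∧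
      Set.ncard {v | f v ≠ none} = 7 ∧
      ¬ IsGeometricalGridTranslation 2 ![3, 3] f) ∧
    (∀ g : {v : Fin 2 → ℤ // InGrid 2 ![3, 3] v} →
        Option {v : Fin 2 → ℤ // InGrid 2 ![3, 3] v},
      IsGeometricalGridTranslation 2 ![3, 3] g →
        Set.ncard {v | g v ≠ none} = (3 - 1) * 3) ∧
    (∃ f : {v : Fin 2 → ℤ // InGrid 2 ![3, 3] v} →
        Option {v : Fin 2 → ℤ // InGrid 2 ![3, 3] v},
      IsGeneralizedGridTranslation 2 ![3, 3] f ∧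
      ¬ IsGeometricalGridTranslation 2 ![3, 3] f ∧
      ¬ ∀ v, f v = none) := by
  have hcand := isCandidateGridTranslation_sequenceShift_boundaryCycle
  have hcard := ncard_sequenceShift_ne_none boundaryCycle_injective
  have not_geometrical : ∀ f : GridVertex ![3, 3] → Option (GridVertex ![3, 3]),
      7 ≤ {v | f v ≠ none}.ncard → ¬ IsGeometricalGridTranslation 2 ![3, 3] f := by
    intro f hf hgeom
    have := hgeom.ncard_three_by_three
    omega
  obtain ⟨f, hf, hle⟩ := hcand.exists_isGeneralized_ncard_le
  rw [hcard] at hle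
  exact ⟨⟨sequenceShift boundaryCycle, hcand, hcard, not_geometrical _ hcard.ge⟩,
    fun _ => IsGeometricalGridTranslation.ncard_three_by_three,
    f, hf, not_geometrical f hle, fun hnone => by simp [hnone] at hle⟩
end
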